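/- arXiv:1106.0096 — 3 statements merged into one kernel-verified Lean document; each statement's English description precedes it below -/
import Mathlib

section
/- Let S = {(arg(x), arg(y)) ∈ U² : x, y ∈ ℂ∖{0}, x + y + 1 = 0} be the coamoeba of the line x + y + 1 = 0 in (ℂ∖{0})². Then S is exactly the image in U² = (ℝ/2πℤ)² of the set {(α,β) ∈ (−π,π)² : |α − β| > π} ∪ {(π,0), (0,π), (π,π)}; that is, S consists of the interiors of the two triangles with vertex sets {(−π,0),(−π,π),(0,π)} and {(0,−π),(π,−π),(π,0)}, together with the three points (π,0), (0,π), (π,π), all taken modulo 2π. -/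
open scoped Real

lemma coam_fwd (x y : ℂ) (h : x + y + 1 = 0) (hx : 0 < x.im) :
    x.arg ∈ Set.Ioo (-π) π ∧ y.arg ∈ Set.Ioo (-π) π ∧ π < x.arg - y.arg := by
  have hre : x.re + y.re + 1 = 0 := by simpa using congrArg Complex.re h
  have him : x.im + y.im = 0 := by simpa using congrArg Complex.im h
  have hx0 : x ≠ 0 := by rintro rfl; simp at hx
  have hy0 : y ≠ 0 := by rintro rfl; simp at him; linarith
  have h1 : 0 ≤ x.arg := Complex.arg_nonneg_iff.2 hx.le
  have h2 : y.arg < 0 := Complex.arg_neg_iff.2 (by linarith)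
  have h3 : x.arg < π := Complex.arg_lt_pi_iff.2 (Or.inr hx.ne')
  have h4 := Complex.neg_pi_lt_arg y
  have hp := Real.pi_pos
  refine ⟨⟨by linarith, h3⟩, ⟨h4, by linarith⟩, ?_⟩
  by_contra hc
  have hs := Real.sin_nonneg_of_nonneg_of_le_pi (x := x.arg - y.arg) (by linarith) (by linarith)
  rw [Real.sin_sub, Complex.sin_arg, Complex.sin_arg, Complex.cos_arg hx0, Complex.cos_arg hy0] at hs
  have e : x.im / ‖x‖ * (y.re / ‖y‖) - x.re / ‖x‖ * (y.im / ‖y‖) = - (x.im / (‖x‖ * ‖y‖)) := by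
    have a : y.re = -1 - x.re := by linarith
    have b : y.im = - x.im := by linarith
    have c : ‖x‖ ≠ 0 := by simpa using hx0
    have d : ‖y‖ ≠ 0 := by simpa using hy0
    rw [a, b]
    field_simp
    ring
  have : 0 < x.im / (‖x‖ * ‖y‖) :=
    div_pos hx (mul_pos (norm_pos_iff.2 hx0) (norm_pos_iff.2 hy0))
  linarith

lemma coam_bwd (α β : ℝ) (ha : α ∈ Set.Ioo (-π) π) (hb : β ∈ Set.Ioo (-π) π) (h : π < α - β) :
    ∃ x y : ℂ, x ≠ 0 ∧ y ≠ 0 ∧ x + y + 1 = 0 ∧ x.arg = α ∧ y.arg = β := by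
  obtain ⟨ha1, ha2⟩ := ha
  obtain ⟨hb1, hb2⟩ := hb
  have s1 : 0 < Real.sin α := Real.sin_pos_of_pos_of_lt_pi (by linarith) ha2
  have s2 : Real.sin β < 0 := Real.sin_neg_of_neg_of_neg_pi_lt (by linarith) hb1
  have s3 : Real.sin (α - β) < 0 := by
    have := Real.sin_pos_of_pos_of_lt_pi (x := α - β - π) (by linarith) (by linarith)
    rw [Real.sin_sub_pi] at this
    linarith
  have r1 : 0 < Real.sin β / Real.sin (α - β) := div_pos_of_neg_of_neg s2 s3
  have r2 : 0 < -Real.sin α / Real.sin (α - β) := div_pos_of_neg_of_neg (by linarith) s3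
  have A := Complex.arg_mul_cos_add_sin_mul_I r1 (θ := α) ⟨ha1, ha2.le⟩
  have B := Complex.arg_mul_cos_add_sin_mul_I r2 (θ := β) ⟨hb1, hb2.le⟩
  refine ⟨_, _, ?_, ?_, ?_, A, B⟩
  · intro h0
    rw [h0, Complex.arg_zero] at A
    linarith
  · intro h0
    rw [h0, Complex.arg_zero] at B
    linarith
  · have s4 := s3.ne
    rw [← Complex.ofReal_cos, ← Complex.ofReal_sin, ← Complex.ofReal_cos, ← Complex.ofReal_sin]
    apply Complex.ext
    · simp [-Complex.ofReal_div, -Complex.ofReal_neg, -Complex.ofReal_cos, -Complex.ofReal_sin]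
      field_simp
      rw [Real.sin_sub]
      ring
    · simp [-Complex.ofReal_div, -Complex.ofReal_neg, -Complex.ofReal_cos, -Complex.ofReal_sin]
      field_simp
      ring

/-- The coamoeba of the line `x + y + 1 = 0` in `(ℂ∖{0})²` consists of the interiors
of the two triangles with vertices `{(-π,0),(-π,π),(0,π)}` and `{(0,-π),(π,-π),(π,0)}`
— i.e. the image in `U² = (ℝ/2πℤ)²` of `{(α,β) ∈ (-π,π)² : |α-β| > π}` —
together with the three points `(π,0)`, `(0,π)`, `(π,π)`. -/
theorem coAmoeba_line_in_two_torus :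
    {p : Real.Angle × Real.Angle | ∃ x y : ℂ, x ≠ 0 ∧ y ≠ 0 ∧ x + y + 1 = 0 ∧
        p = ((Complex.arg x : Real.Angle), (Complex.arg y : Real.Angle))} =
      {p : Real.Angle × Real.Angle | ∃ α β : ℝ,
          α ∈ Set.Ioo (-π) π ∧ β ∈ Set.Ioo (-π) π ∧ |α - β| > π ∧
          p = ((α : Real.Angle), (β : Real.Angle))} ∪
      {((π : Real.Angle), (0 : Real.Angle)), ((0 : Real.Angle), (π : Real.Angle)),
        ((π : Real.Angle), (π : Real.Angle))} := by
  ext ⟨p, q⟩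
  constructor
  · rintro ⟨x, y, hx, hy, h, hpq⟩
    have hre : x.re + y.re + 1 = 0 := by simpa using congrArg Complex.re h
    have him : x.im + y.im = 0 := by simpa using congrArg Complex.im h
    rcases lt_trichotomy x.im 0 with hi | hi | hi
    · left
      obtain ⟨h1, h2, h3⟩ := coam_fwd y x (by rw [← h]; ring) (by linarith)
      refine ⟨_, _, h2, h1, ?_, hpq⟩
      rw [abs_sub_comm]
      exact lt_of_lt_of_le h3 (le_abs_self _)
    · right
      have hyi : y.im = 0 := by linarith
      have key : ∀ z : ℂ, z ≠ 0 → z.im = 0 → (z.re < 0 ∧ z.arg = π) ∨ (0 < z.re ∧ z.arg = 0) := by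
        intro z hz hzi
        have hz' : z.re ≠ 0 := fun h' => hz (Complex.ext h' hzi)
        rcases lt_or_gt_of_ne hz' with h' | h'
        · exact Or.inl ⟨h', Complex.arg_eq_pi_iff.2 ⟨h', hzi⟩⟩
        · exact Or.inr ⟨h', Complex.arg_eq_zero_iff.2 ⟨h'.le, hzi⟩⟩
      rw [hpq]
      rcases key x hx hi with ⟨a, b⟩ | ⟨a, b⟩ <;> rcases key y hy hyi with ⟨c, d⟩ | ⟨c, d⟩
      · simp [b, d]
      · simp [b, d]
      · simp [b, d]
      · linarith
    · left
      obtain ⟨h1, h2, h3⟩ := coam_fwd x y h hi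
      exact ⟨_, _, h1, h2, lt_of_lt_of_le h3 (le_abs_self _), hpq⟩
  · rintro (⟨α, β, ha, hb, hab, hpq⟩ | hpq)
    · rcases lt_abs.1 hab with h | h
      · obtain ⟨x, y, hx, hy, h0, rfl, rfl⟩ := coam_bwd α β ha hb h
        exact ⟨x, y, hx, hy, h0, hpq⟩
      · obtain ⟨y, x, hy, hx, h0, rfl, rfl⟩ := coam_bwd β α hb ha (by linarith)
        exact ⟨x, y, hx, hy, by rw [← h0]; ring, hpq⟩
    · have e1 : Complex.arg (-2) = π := Complex.arg_eq_pi_iff.2 (by norm_num)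
      have e2 : Complex.arg (-1/2) = π := Complex.arg_eq_pi_iff.2 (by norm_num)
      rcases hpq with hpq | hpq | hpq
      · exact ⟨-2, 1, by norm_num, by norm_num, by norm_num, by rw [hpq, e1]; simp⟩
      · exact ⟨1, -2, by norm_num, by norm_num, by norm_num, by rw [hpq, e1]; simp⟩
      · exact ⟨-1/2, -1/2, by norm_num, by norm_num, by norm_num, by rw [hpq, e2]⟩
end

section
/- With the phase limit lines h₀, h₁, h₂, h₃ as above: the four lines are pairwise disjoint in U³ if and only if ζ₁, ζ₂, ζ₃ are not collinear in ℂ (equivalently, if and only if the four zeros ζ₀ = ∞, ζ₁, ζ₂, ζ₃ do not all lie on a common circle in ℙ¹). -/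
open Filter Topology

noncomputable section

lemma collinear_of_sameRay_aux (x y z : ℂ) (hy : x ≠ y) (hz : x ≠ z)
    (h : SameRay ℝ (x - y) (x - z)) : Collinear ℝ ({x, y, z} : Set ℂ) := by
  obtain ⟨r, -, hr⟩ := h.exists_pos_left (sub_ne_zero.2 hy) (sub_ne_zero.2 hz)
  rw [collinear_iff_of_mem (p₀ := x) (by simp)]
  refine ⟨x - y, ?_⟩
  intro p hp
  simp only [Set.mem_insert_iff, Set.mem_singleton_iff] at hp
  rcases hp with rfl | rfl | rfl
  · exact ⟨0, by simp⟩
  · exact ⟨-1, by simp⟩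
  · exact ⟨-r, by rw [neg_smul, hr]; simp⟩

lemma collinear_of_arg_aux (x y z : ℂ) (hy : x ≠ y) (hz : x ≠ z)
    (h : (x - y).arg = (x - z).arg) : Collinear ℝ ({x, y, z} : Set ℂ) :=
  collinear_of_sameRay_aux x y z hy hz (Complex.sameRay_iff.2 (Or.inr (Or.inr h)))

lemma collinear_of_arg_aux_rev (x y z : ℂ) (hy : x ≠ y) (hz : x ≠ z)
    (h : (y - x).arg = (z - x).arg) : Collinear ℝ ({x, y, z} : Set ℂ) := by
  have h1 : SameRay ℝ (y - x) (z - x) := Complex.sameRay_iff.2 (Or.inr (Or.inr h))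
  have h2 := h1.neg
  rw [neg_sub, neg_sub] at h2
  exact collinear_of_sameRay_aux x y z hy hz h2

lemma arg_eq_of_wbtw_aux (x y z : ℂ) (hy : x ≠ y) (hz : x ≠ z)
    (h : Wbtw ℝ x y z) : (x - y).arg = (x - z).arg := by
  have h2 := h.sameRay_vsub_left.neg
  simp only [vsub_eq_sub, neg_sub] at h2
  rcases Complex.sameRay_iff.1 h2 with h | h | h
  · exact absurd (sub_eq_zero.1 h) hy
  · exact absurd (sub_eq_zero.1 h) hz
  · exact h

/-- The four phase limit lines `h₀, h₁, h₂, h₃` of the line in `ℙ³` with coordinate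
zeros `∞, ζ₁, ζ₂, ζ₃` are pairwise disjoint in `U³` if and only if `ζ₁, ζ₂, ζ₃` are
not collinear in `ℂ` (equivalently, iff the four zeros are not cocircular in `ℙ¹`). -/
theorem phase_limit_lines_pairwise_disjoint_iff (ζ₁ ζ₂ ζ₃ : ℂ)
    (h12 : ζ₁ ≠ ζ₂) (h13 : ζ₁ ≠ ζ₃) (h23 : ζ₂ ≠ ζ₃) :
    let h₀ : Set (Fin 3 → Real.Angle) := {θ | ∃ t : Real.Angle, θ = fun _ => t}
    let h₁ : Set (Fin 3 → Real.Angle) :=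
      {θ | ∃ t : Real.Angle, θ = ![t, (Complex.arg (ζ₁ - ζ₂) : Real.Angle),
        (Complex.arg (ζ₁ - ζ₃) : Real.Angle)]}
    let h₂ : Set (Fin 3 → Real.Angle) :=
      {θ | ∃ t : Real.Angle, θ = ![(Complex.arg (ζ₂ - ζ₁) : Real.Angle), t,
        (Complex.arg (ζ₂ - ζ₃) : Real.Angle)]}
    let h₃ : Set (Fin 3 → Real.Angle) :=
      {θ | ∃ t : Real.Angle, θ = ![(Complex.arg (ζ₃ - ζ₁) : Real.Angle),
        (Complex.arg (ζ₃ - ζ₂) : Real.Angle), t]}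
    (Disjoint h₀ h₁ ∧ Disjoint h₀ h₂ ∧ Disjoint h₀ h₃ ∧
     Disjoint h₁ h₂ ∧ Disjoint h₁ h₃ ∧ Disjoint h₂ h₃) ↔
      ¬ Collinear ℝ ({ζ₁, ζ₂, ζ₃} : Set ℂ) := by
  intro h₀ h₁ h₂ h₃
  have c213 : ({ζ₂, ζ₁, ζ₃} : Set ℂ) = {ζ₁, ζ₂, ζ₃} := by ext; simp; tauto
  have c312 : ({ζ₃, ζ₁, ζ₂} : Set ℂ) = {ζ₁, ζ₂, ζ₃} := by ext; simp; tauto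
  constructor
  · rintro ⟨d1, d2, d3, -, -, -⟩ hc
    rw [Set.disjoint_left] at d1 d2 d3
    rcases hc.wbtw_or_wbtw_or_wbtw with h | h | h
    · have e := arg_eq_of_wbtw_aux _ _ _ h12 h13 h
      refine d1 (a := fun _ => ((ζ₁ - ζ₂).arg : Real.Angle)) ⟨_, rfl⟩ ⟨((ζ₁ - ζ₂).arg : Real.Angle), ?_⟩
      funext i
      fin_cases i <;> simp [e]
    · have e := arg_eq_of_wbtw_aux _ _ _ h23 h12.symm h
      refine d2 (a := fun _ => ((ζ₂ - ζ₁).arg : Real.Angle)) ⟨_, rfl⟩ ⟨((ζ₂ - ζ₁).arg : Real.Angle), ?_⟩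
      funext i
      fin_cases i <;> simp [e]
    · have e := arg_eq_of_wbtw_aux _ _ _ h13.symm h23.symm h
      refine d3 (a := fun _ => ((ζ₃ - ζ₁).arg : Real.Angle)) ⟨_, rfl⟩ ⟨((ζ₃ - ζ₁).arg : Real.Angle), ?_⟩
      funext i
      fin_cases i <;> simp [e]
  · intro hc
    refine ⟨?_, ?_, ?_, ?_, ?_, ?_⟩ <;> rw [Set.disjoint_left] <;>
      rintro θ ⟨t, ht⟩ ⟨s, hs⟩ <;> apply hc <;> rw [ht] at hs <;>
      have e0 := congrFun hs 0 <;> have e1 := congrFun hs 1 <;> have e2 := congrFun hs 2 <;>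
      simp at e0 e1 e2
    · exact collinear_of_arg_aux _ _ _ h12 h13 (Complex.arg_coe_angle_eq_iff.1 (e1.symm.trans e2))
    · rw [← c213]
      exact collinear_of_arg_aux _ _ _ h12.symm h23
        (Complex.arg_coe_angle_eq_iff.1 (e0.symm.trans e2))
    · rw [← c312]
      exact collinear_of_arg_aux _ _ _ h13.symm h23.symm
        (Complex.arg_coe_angle_eq_iff.1 (e0.symm.trans e1))
    · rw [← c312]
      exact collinear_of_arg_aux_rev _ _ _ h13.symm h23.symm e2
    · rw [← c213]
      exact collinear_of_arg_aux_rev _ _ _ h12.symm h23 (by simpa using e1)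
    · exact collinear_of_arg_aux_rev _ _ _ h12 h13 (by simpa using e0)

end
end

section
/- Suppose ζ₁, ζ₂, ζ₃ ∈ ℂ are distinct and not collinear. Then the map arg∘φ : ℂ∖{ζ₁,ζ₂,ζ₃} → U³ is an immersion: for every x ∈ ℂ∖{ζ₁,ζ₂,ζ₃}, its differential at x — the ℝ-linear map ℂ → ℝ³ sending v to (Im(v/(x−ζ₁)), Im(v/(x−ζ₂)), Im(v/(x−ζ₃))) — is injective. -/
theorem exists_smul_of_im_div_eq (x z u v : ℂ) (hx : x ≠ z) (huv : v - u ≠ 0)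
    (h : (u / (x - z)).im = (v / (x - z)).im) :
    ∃ r : ℝ, z = r • (v - u) +ᵥ x := by
  have hd : x - z ≠ 0 := sub_ne_zero.mpr hx
  have him : ((v - u) / (x - z)).im = 0 := by
    rw [sub_div, Complex.sub_im, h, sub_self]
  have hre : (v - u) / (x - z) = (((v - u) / (x - z)).re : ℂ) := by
    apply Complex.ext <;> simp [him]
  set t : ℝ := ((v - u) / (x - z)).re with ht
  have ht0 : (t : ℂ) ≠ 0 := by
    rw [← hre]
    exact div_ne_zero huv hd
  have hw : v - u = t * (x - z) := by
    rw [← hre, div_mul_cancel₀ _ hd]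
  refine ⟨-t⁻¹, ?_⟩
  rw [hw, vadd_eq_add, Complex.real_smul]
  push_cast
  field_simp
  ring

/-- If `ζ₁, ζ₂, ζ₃` are distinct and not collinear, then `arg ∘ φ`, where
`φ(x) = (x-ζ₁, x-ζ₂, x-ζ₃)`, is an immersion: at every `x ∉ {ζ₁,ζ₂,ζ₃}` its
differential, the `ℝ`-linear map `v ↦ (Im(v/(x-ζ₁)), Im(v/(x-ζ₂)), Im(v/(x-ζ₃)))`,
is injective. -/
theorem argPhi_immersion (ζ₁ ζ₂ ζ₃ : ℂ)
    (h12 : ζ₁ ≠ ζ₂) (h13 : ζ₁ ≠ ζ₃) (h23 : ζ₂ ≠ ζ₃)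
    (hncol : ¬ Collinear ℝ ({ζ₁, ζ₂, ζ₃} : Set ℂ)) :
    ∀ x : ℂ, x ≠ ζ₁ → x ≠ ζ₂ → x ≠ ζ₃ →
      Function.Injective (fun v : ℂ =>
        (![(v / (x - ζ₁)).im, (v / (x - ζ₂)).im, (v / (x - ζ₃)).im] : Fin 3 → ℝ)) := by
  intro x h1 h2 h3 u v huv
  by_contra hne
  have hw : v - u ≠ 0 := sub_ne_zero.mpr (Ne.symm hne)
  have e0 := congrFun huv 0
  have e1 := congrFun huv 1
  have e2 := congrFun huv 2
  apply hncol
  rw [collinear_iff_exists_forall_eq_smul_vadd]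
  refine ⟨x, v - u, ?_⟩
  rintro p (rfl | rfl | rfl)
  · exact exists_smul_of_im_div_eq x _ u v h1 hw e0
  · exact exists_smul_of_im_div_eq x _ u v h2 hw e1
  · exact exists_smul_of_im_div_eq x _ u v h3 hw e2
end
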